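/- There are universal constants C₁, C₂ > 0 such that for any 0 < ε, β < 1, any q ∈ {1, 2}, any finite metric space ([m], d) of diameter at most 1, and any k ≤ m, there exists an ε-add-DP algorithm that, on any input dataset D of n points of [m], outputs a set S ⊆ [m] with |S| = k satisfying, with probability at least 1 − β, cost^q(S; D) ≤ C₁·OPT^q_k(D) + C₂·k·log(m·n/β)/ε. -/

import Mathlib

open scoped ENNReal

noncomputable section

/-- A mechanism `M` is `ε`-add-DP: for every dataset `D` and element `x`,
with `D ∪ {x}` and `D` as the neighboring pair, the probability of every outcome
set under `M (D ∪ {x})` is at most `e^ε` times that under `M D`. -/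
def AddDP {X : Type*} {O : Type*} (M : Multiset X → PMF O) (ε : ℝ) : Prop :=
  ∀ (D : Multiset X) (x : X) (S : Set O),
    (M (x ::ₘ D)).toOuterMeasure S ≤ ENNReal.ofReal (Real.exp ε) * (M D).toOuterMeasure S

/-- A mechanism `M` is (two-sided) `ε`-DP with respect to add-remove neighbors. -/
def PureDP {X : Type*} {O : Type*} (M : Multiset X → PMF O) (ε : ℝ) : Prop :=
  ∀ (D : Multiset X) (x : X) (S : Set O),
    (M (x ::ₘ D)).toOuterMeasure S ≤ ENNReal.ofReal (Real.exp ε) * (M D).toOuterMeasure S ∧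
    (M D).toOuterMeasure S ≤ ENNReal.ofReal (Real.exp ε) * (M (x ::ₘ D)).toOuterMeasure S

/-- A finite metric space on `[m]` with diameter at most `1`. -/
structure FinMetric (m : ℕ) where
  d : Fin m → Fin m → ℝ
  nonneg : ∀ a b, 0 ≤ d a b
  refl : ∀ a, d a a = 0
  eq_of_d_eq_zero : ∀ a b, d a b = 0 → a = b
  symm : ∀ a b, d a b = d b a
  triangle : ∀ a b c, d a c ≤ d a b + d b c
  diam_le_one : ∀ a b, d a b ≤ 1

/-- The `(·)^q` clustering cost `cost^q(S; D) = ∑_{x ∈ D} min_{c ∈ S} d(c, x)^q`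
(with the convention that the per-point cost is `1` when `S = ∅`). -/
noncomputable def costq {m : ℕ} (Met : FinMetric m) (q : ℕ) (S : Finset (Fin m))
    (D : Multiset (Fin m)) : ℝ :=
  (D.map fun x => if h : S.Nonempty then S.inf' h (fun c => Met.d c x ^ q) else 1).sum

/-! The exponential mechanism samples a `k`-subset `S` with probability proportional to
`exp (-ε · cost(S; D))`. Writing `p S = (∑ T, exp (ε (cost S - cost T)))⁻¹`, both properties are
read off from the differences `cost S - cost T`. Adding a point raises every cost by an amount in
`[0, 1]`, so these differences move by at most `1` and each `p S` changes by a factor of at most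
`exp ε`; monotonicity is what saves the usual factor `2`. Keeping only the summand of an optimal
`T` gives `p S ≤ exp (-ε t)` when `S` exceeds the optimum by `t`, and a union bound over the
`m.choose k ≤ m ^ k` candidates concludes. Thus the approximation factor is `1`. -/

section Gibbs

variable {O : Type*} [Fintype O] [Nonempty O]

/-- The Gibbs distribution of the loss `f` at inverse temperature `ε`, which gives `o` a probability
proportional to `exp (-ε f o)`: the output distribution of the exponential mechanism. -/
def gibbsPMF (ε : ℝ) (f : O → ℝ) : PMF O :=
  PMF.ofFintype
    (fun o => ENNReal.ofReal (Real.exp (-(ε * f o)) / ∑ o', Real.exp (-(ε * f o')))) (by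
      rw [← ENNReal.ofReal_sum_of_nonneg fun o _ => by positivity, ← Finset.sum_div,
        div_self (by positivity), ENNReal.ofReal_one])

lemma gibbsPMF_apply (ε : ℝ) (f : O → ℝ) (o : O) :
    gibbsPMF ε f o = ENNReal.ofReal (∑ o', Real.exp (ε * (f o - f o')))⁻¹ := by
  have hsum : ∑ o', Real.exp (ε * (f o - f o')) =
      (∑ o', Real.exp (-(ε * f o'))) / Real.exp (-(ε * f o)) := by
    rw [Finset.sum_div]
    refine Finset.sum_congr rfl fun o' _ => ?_
    rw [← Real.exp_sub]
    ring_nf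
  rw [hsum, inv_div]
  rfl

lemma gibbsPMF_apply_le_exp (ε : ℝ) (f : O → ℝ) (o o' : O) :
    gibbsPMF ε f o ≤ ENNReal.ofReal (Real.exp (-(ε * (f o - f o')))) := by
  rw [gibbsPMF_apply, Real.exp_neg]
  refine ENNReal.ofReal_le_ofReal (inv_anti₀ (Real.exp_pos _) ?_)
  exact Finset.single_le_sum (f := fun o' => Real.exp (ε * (f o - f o')))
    (fun _ _ => (Real.exp_pos _).le) (Finset.mem_univ o')

lemma gibbsPMF_apply_le_mul {ε Δ : ℝ} {f g : O → ℝ} (hε : 0 ≤ ε)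
    (h : ∀ o o', f o - f o' ≤ g o - g o' + Δ) (o : O) :
    gibbsPMF ε g o ≤ ENNReal.ofReal (Real.exp (ε * Δ)) * gibbsPMF ε f o := by
  have hsum : ∑ o', Real.exp (ε * (f o - f o')) ≤
      Real.exp (ε * Δ) * ∑ o', Real.exp (ε * (g o - g o')) := by
    rw [Finset.mul_sum]
    refine Finset.sum_le_sum fun o' _ => ?_
    rw [← Real.exp_add, ← mul_add, add_comm Δ]
    exact Real.exp_le_exp.2 (mul_le_mul_of_nonneg_left (h o o') hε)
  rw [gibbsPMF_apply, gibbsPMF_apply, ← ENNReal.ofReal_mul (Real.exp_pos _).le, ← div_eq_mul_inv]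
  refine ENNReal.ofReal_le_ofReal ?_
  rwa [le_div_iff₀ (by positivity), inv_mul_le_iff₀ (by positivity), mul_comm]

lemma ofReal_le_gibbsPMF_toOuterMeasure_near_min {ε : ℝ} (hε : 0 ≤ ε) (f : O → ℝ) (t : ℝ) :
    ENNReal.ofReal (1 - Fintype.card O * Real.exp (-(ε * t))) ≤
      (gibbsPMF ε f).toOuterMeasure {o | ∀ o', f o ≤ f o' + t} := by
  set p := gibbsPMF ε f
  set A := {o | ∀ o', f o ≤ f o' + t}
  obtain ⟨o₀, hmin⟩ := Finite.exists_min f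
  have hbad : ∀ o ∈ Aᶜ, p o ≤ ENNReal.ofReal (Real.exp (-(ε * t))) := by
    intro o ho
    obtain ⟨o', ho'⟩ : ∃ o', f o' + t < f o := by simpa [A] using ho
    have hgap : t ≤ f o - f o₀ := by linarith [hmin o']
    exact (gibbsPMF_apply_le_exp ε f o o₀).trans (by gcongr)
  have hcompl : p.toOuterMeasure Aᶜ ≤
      ENNReal.ofReal (Fintype.card O * Real.exp (-(ε * t))) := calc
    p.toOuterMeasure Aᶜ = ∑ o, Aᶜ.indicator p o := p.toOuterMeasure_apply_fintype _
    _ ≤ ∑ _o : O, ENNReal.ofReal (Real.exp (-(ε * t))) :=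
      Finset.sum_le_sum fun o _ => Set.indicator_apply_le' (hbad o) fun _ => zero_le
    _ = ENNReal.ofReal (Fintype.card O * Real.exp (-(ε * t))) := by
      simp [ENNReal.ofReal_mul]
  have htotal : p.toOuterMeasure (A ∪ Aᶜ) = 1 :=
    (p.toOuterMeasure_apply_eq_one_iff _).2 (by simp)
  rw [ENNReal.ofReal_sub _ (by positivity), ENNReal.ofReal_one, tsub_le_iff_right, ← htotal]
  exact (MeasureTheory.measure_union_le A Aᶜ).trans (by gcongr)

end Gibbs

section Privacy

variable {X O : Type*}

lemma toOuterMeasure_le_mul_of_apply_le {p p' : PMF O} {c : ℝ≥0∞} (h : ∀ o, p o ≤ c * p' o)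
    (S : Set O) : p.toOuterMeasure S ≤ c * p'.toOuterMeasure S := by
  rw [PMF.toOuterMeasure_apply, PMF.toOuterMeasure_apply, ← ENNReal.tsum_mul_left]
  refine ENNReal.tsum_le_tsum fun o => ?_
  by_cases ho : o ∈ S
  · simpa only [Set.indicator_of_mem ho] using h o
  · simp only [Set.indicator_of_notMem ho, zero_le]

lemma PureDP.addDP {M : Multiset X → PMF O} {ε : ℝ} (hM : PureDP M ε) : AddDP M ε :=
  fun D x S => (hM D x S).1

lemma PureDP.map {M : Multiset X → PMF O} {ε : ℝ} (hM : PureDP M ε) {O' : Type*} (g : O → O') :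
    PureDP (fun D => (M D).map g) ε := by
  intro D x S
  simpa only [PMF.toOuterMeasure_map_apply] using hM D x (g ⁻¹' S)

lemma pureDP_gibbsPMF [Fintype O] [Nonempty O] {loss : Multiset X → O → ℝ} {ε Δ : ℝ}
    (hε : 0 ≤ ε) (hmono : ∀ D x o, loss D o ≤ loss (x ::ₘ D) o)
    (hsens : ∀ D x o, loss (x ::ₘ D) o ≤ loss D o + Δ) :
    PureDP (fun D => gibbsPMF ε (loss D)) (ε * Δ) := fun D x S =>
  ⟨toOuterMeasure_le_mul_of_apply_le (gibbsPMF_apply_le_mul hε fun o o' => by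
      linarith [hmono D x o, hsens D x o']) S,
    toOuterMeasure_le_mul_of_apply_le (gibbsPMF_apply_le_mul hε fun o o' => by
      linarith [hsens D x o, hmono D x o']) S⟩

end Privacy

lemma choose_mul_exp_neg_mul_log_le (m : ℕ) {k n : ℕ} {β : ℝ} (hk : k ≠ 0) (hn : n ≠ 0)
    (hβ : 0 < β) (hβ1 : β ≤ 1) :
    m.choose k * Real.exp (-(k * Real.log (m * n / β))) ≤ β := by
  rcases m.eq_zero_or_pos with rfl | hm
  · rw [Nat.choose_eq_zero_of_lt (Nat.pos_of_ne_zero hk), Nat.cast_zero, zero_mul]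
    exact hβ.le
  have hβn : β / n ≤ β := div_le_self hβ.le (by exact_mod_cast Nat.one_le_iff_ne_zero.2 hn)
  calc m.choose k * Real.exp (-(k * Real.log (m * n / β)))
      ≤ (m : ℝ) ^ k * Real.exp (-(k * Real.log (m * n / β))) := by
        gcongr
        exact_mod_cast Nat.choose_le_pow m k
    _ = (β / n) ^ k := by
        rw [← mul_neg, ← Real.log_inv, Real.exp_nat_mul, Real.exp_log (by positivity), ← mul_pow]
        congr 1
        field_simp
    _ ≤ β / n := pow_le_of_le_one (by positivity) (hβn.trans hβ1) hk
    _ ≤ β := hβn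

section Clustering

variable {m : ℕ} (Met : FinMetric m) (q : ℕ)

lemma costq_cons (S : Finset (Fin m)) (x : Fin m) (D : Multiset (Fin m)) :
    costq Met q S (x ::ₘ D) = costq Met q S {x} + costq Met q S D := by
  simp only [costq, Multiset.map_cons, Multiset.sum_cons, Multiset.map_singleton,
    Multiset.sum_singleton]

lemma costq_singleton_nonneg (S : Finset (Fin m)) (x : Fin m) : 0 ≤ costq Met q S {x} := by
  rw [costq, Multiset.map_singleton, Multiset.sum_singleton]
  split_ifs with hS
  · exact Finset.le_inf' hS _ fun c _ => pow_nonneg (Met.nonneg c x) q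
  · exact zero_le_one

lemma costq_singleton_le_one (S : Finset (Fin m)) (x : Fin m) : costq Met q S {x} ≤ 1 := by
  rw [costq, Multiset.map_singleton, Multiset.sum_singleton]
  split_ifs with hS
  · obtain ⟨c, hc⟩ := hS
    exact (Finset.inf'_le _ hc).trans (pow_le_one₀ (Met.nonneg c x) (Met.diam_le_one c x))
  · exact le_rfl

variable {q} {k : ℕ}

lemma ofReal_le_gibbsPMF_costq_near_min [Nonempty {S : Finset (Fin m) // S.card = k}] {ε β : ℝ}
    (hε : 0 < ε) (hβ : 0 < β) (hβ1 : β ≤ 1) (D : Multiset (Fin m)) :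
    ENNReal.ofReal (1 - β) ≤
      (gibbsPMF ε fun S : {S : Finset (Fin m) // S.card = k} => costq Met q S D).toOuterMeasure
        {S | ∀ T : {S : Finset (Fin m) // S.card = k},
          costq Met q S D ≤ costq Met q T D + k * Real.log (m * D.card / β) / ε} := by
  by_cases hdeg : k = 0 ∨ D = 0
  · -- Here the error term vanishes (for `D = 0` through `Real.log 0 = 0`), so the union bound
    -- gives nothing; but all candidates have the same cost.
    have hall : ∀ S T : {S : Finset (Fin m) // S.card = k},
        costq Met q S D ≤ costq Met q T D + k * Real.log (m * D.card / β) / ε := by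
      rintro ⟨S, hS⟩ ⟨T, hT⟩
      rcases hdeg with rfl | rfl
      · simp [Finset.card_eq_zero.1 hS, Finset.card_eq_zero.1 hT]
      · simp [costq]
    exact (ENNReal.ofReal_le_one.2 (by linarith)).trans
      ((PMF.toOuterMeasure_apply_eq_one_iff _ _).2 fun S _ => hall S).ge
  · push Not at hdeg
    have hcard : Fintype.card {S : Finset (Fin m) // S.card = k} = m.choose k := by simp
    have hbad := choose_mul_exp_neg_mul_log_le m hdeg.1 (by simpa using hdeg.2) hβ hβ1 (n := D.card)
    refine le_trans (ENNReal.ofReal_le_ofReal ?_)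
      (ofReal_le_gibbsPMF_toOuterMeasure_near_min hε.le _ _)
    rw [hcard, mul_div_cancel₀ _ hε.ne']
    linarith

end Clustering

theorem stmt17_general {ε β : ℝ} (hε : 0 < ε) (hβ : 0 < β) (hβ1 : β ≤ 1) (q : ℕ) {m : ℕ}
    (Met : FinMetric m) {k : ℕ} (hk : k ≤ m) :
    ∃ M : Multiset (Fin m) → PMF (Finset (Fin m)),
      PureDP M ε ∧
      ∀ D : Multiset (Fin m),
        ENNReal.ofReal (1 - β) ≤
          (M D).toOuterMeasure
            {S : Finset (Fin m) | S.card = k ∧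
              ∀ T : Finset (Fin m), T.card = k →
                costq Met q S D ≤
                  costq Met q T D + k * Real.log (m * D.card / β) / ε} := by
  obtain ⟨S₀, -, hS₀⟩ := Finset.exists_subset_card_eq (s := (Finset.univ : Finset (Fin m)))
    (n := k) (by simpa using hk)
  have : Nonempty {S : Finset (Fin m) // S.card = k} := ⟨⟨S₀, hS₀⟩⟩
  have hDP : PureDP (fun D => gibbsPMF ε
      fun S : {S : Finset (Fin m) // S.card = k} => costq Met q S D) (ε * 1) :=
    pureDP_gibbsPMF hε.le
      (fun D x S => by linarith [costq_cons Met q S x D, costq_singleton_nonneg Met q S x])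
      (fun D x S => by linarith [costq_cons Met q S x D, costq_singleton_le_one Met q S x])
  rw [mul_one] at hDP
  refine ⟨_, hDP.map Subtype.val, fun D => ?_⟩
  rw [PMF.toOuterMeasure_map_apply]
  exact (ofReal_le_gibbsPMF_costq_near_min Met hε hβ hβ1 D).trans
    (MeasureTheory.measure_mono fun S hS => ⟨S.2, fun T hT => hS ⟨T, hT⟩⟩)

/-- an `ε`-add-DP `O(1)`-approximation for metric `k`-median (`q = 1`) and
`k`-means (`q = 2`) with error `O(k log(mn/β)/ε)`, where `n = |D|`. -/
theorem stmt17 :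
    ∃ C₁ C₂ : ℝ, 0 < C₁ ∧ 0 < C₂ ∧
      ∀ (ε β : ℝ), 0 < ε → ε < 1 → 0 < β → β < 1 →
      ∀ q : ℕ, (q = 1 ∨ q = 2) →
      ∀ (m : ℕ) (Met : FinMetric m) (k : ℕ), k ≤ m →
      ∃ M : Multiset (Fin m) → PMF (Finset (Fin m)),
        AddDP M ε ∧
        ∀ D : Multiset (Fin m),
          ENNReal.ofReal (1 - β) ≤
            (M D).toOuterMeasure
              {S : Finset (Fin m) | S.card = k ∧
                ∀ T : Finset (Fin m), T.card = k →
                  costq Met q S D ≤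
                    C₁ * costq Met q T D +
                      C₂ * k * Real.log (m * D.card / β) / ε} := by
  refine ⟨1, 1, one_pos, one_pos, fun ε β hε _ hβ hβ1 q _ m Met k hk => ?_⟩
  obtain ⟨M, hDP, hcost⟩ := stmt17_general hε hβ hβ1.le q Met hk
  exact ⟨M, hDP.addDP, by simpa only [one_mul] using hcost⟩
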